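/- Let Σ be a real symmetric positive semidefinite n×n matrix, let M ≥ 1 be a natural number and σ > 0. Then the map t ↦ t·M²·Tr(Σ·(t·M·Σ + σ²·I)⁻¹·Σ) is monotonically nondecreasing on [0,∞). Consequently, for any real numbers c, h₁, P with 0 ≤ c² ≤ h₁²·P, one has M − c²·M²·Tr(Σ·(c²·M·Σ + σ²·I)⁻¹·Σ) ≥ M − h₁²·P·M²·Tr(Σ·(h₁²·P·M·Σ + σ²·I)⁻¹·Σ). -/

import Mathlib

open Matrix

lemma trace_aux {n : ℕ} (S : Matrix (Fin n) (Fin n) ℝ) (hS : S.PosSemidef)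
    (a b : ℝ) (ha : 0 ≤ a) (hb : 0 < b) :
    (S * (a • S + b • (1 : Matrix (Fin n) (Fin n) ℝ))⁻¹ * S).trace =
      ∑ i, (hS.1.eigenvalues i) ^ 2 / (a * hS.1.eigenvalues i + b) := by
  have hd : ∀ i, 0 ≤ hS.1.eigenvalues i := hS.eigenvalues_nonneg
  have hspec := hS.1.spectral_theorem
  rw [Unitary.conjStarAlgAut_apply] at hspec
  have hVU := Unitary.coe_star_mul_self hS.1.eigenvectorUnitary
  have hUV := Unitary.coe_mul_star_self hS.1.eigenvectorUnitary
  generalize hS.1.eigenvalues = d at *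
  simp only [Unitary.coe_star] at hspec hVU hUV
  generalize (hS.1.eigenvectorUnitary : Matrix (Fin n) (Fin n) ℝ) = U at *
  generalize star U = V at *
  have hspec' : S = U * diagonal d * V := hspec
  have key : ∀ X Y : Matrix (Fin n) (Fin n) ℝ, (U * X * V) * (U * Y * V) = U * (X * Y) * V := by
    intro X Y
    calc _ = U * X * (V * U) * Y * V := by simp only [Matrix.mul_assoc]
      _ = _ := by rw [hVU]; simp only [Matrix.mul_assoc, Matrix.mul_one, Matrix.one_mul]
  have hpos : ∀ i, 0 < a * d i + b := fun i => by
    have := mul_nonneg ha (hd i)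
    linarith
  have hsum : a • S + b • (1 : Matrix (Fin n) (Fin n) ℝ)
      = U * diagonal (fun i => a * d i + b) * V := by
    have h1 : diagonal (fun i => a * d i + b)
        = a • diagonal d + b • (1 : Matrix (Fin n) (Fin n) ℝ) := by
      ext i j
      by_cases h : i = j
      · subst h; simp
      · simp [h]
    rw [h1, Matrix.mul_add, Matrix.add_mul, Matrix.mul_smul, Matrix.mul_smul, Matrix.smul_mul,
      Matrix.smul_mul, Matrix.mul_one, hUV, ← hspec']
  have hinv : (a • S + b • (1 : Matrix (Fin n) (Fin n) ℝ))⁻¹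
      = U * diagonal (fun i => (a * d i + b)⁻¹) * V := by
    apply Matrix.inv_eq_right_inv
    rw [hsum, key, diagonal_mul_diagonal]
    have : (fun i => (a * d i + b) * (a * d i + b)⁻¹) = fun _ => (1 : ℝ) := by
      funext i
      exact mul_inv_cancel₀ (hpos i).ne'
    rw [this, diagonal_one, Matrix.mul_one, hUV]
  rw [hinv, hspec', key, key, Matrix.trace_mul_cycle, hVU, Matrix.one_mul,
    diagonal_mul_diagonal, diagonal_mul_diagonal, trace_diagonal]
  refine Finset.sum_congr rfl fun i _ => ?_
  rw [div_eq_mul_inv]; ring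

/-- feasibility restriction on the QoS requirement: the map
`t ↦ t·M²·Tr(S·(t·M·S + σ²·I)⁻¹·S)` is monotonically nondecreasing on `[0,∞)`; consequently,
for `0 ≤ c² ≤ h₁²·P` the approximation level at scaling `c` is at least the one at `c² = h₁²·P`. -/
theorem stmt5 {n : ℕ} (S : Matrix (Fin n) (Fin n) ℝ) (hS : S.PosSemidef)
    (M : ℕ) (hM : 1 ≤ M) (σ : ℝ) (hσ : 0 < σ) :
    MonotoneOn
        (fun t : ℝ => t * (M : ℝ) ^ 2 *
          (S * ((t * (M : ℝ)) • S + σ ^ 2 • (1 : Matrix (Fin n) (Fin n) ℝ))⁻¹ * S).trace)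
        (Set.Ici (0 : ℝ)) ∧
      ∀ c h1 P : ℝ, 0 ≤ c ^ 2 → c ^ 2 ≤ h1 ^ 2 * P →
        (M : ℝ) - c ^ 2 * (M : ℝ) ^ 2 *
            (S * ((c ^ 2 * (M : ℝ)) • S + σ ^ 2 • (1 : Matrix (Fin n) (Fin n) ℝ))⁻¹ * S).trace ≥
          (M : ℝ) - h1 ^ 2 * P * (M : ℝ) ^ 2 *
            (S * ((h1 ^ 2 * P * (M : ℝ)) • S + σ ^ 2 • (1 : Matrix (Fin n) (Fin n) ℝ))⁻¹ *
              S).trace := by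
  have hmono : MonotoneOn
        (fun t : ℝ => t * (M : ℝ) ^ 2 *
          (S * ((t * (M : ℝ)) • S + σ ^ 2 • (1 : Matrix (Fin n) (Fin n) ℝ))⁻¹ * S).trace)
        (Set.Ici (0 : ℝ)) := by
    intro s hs t ht hst
    have hs : 0 ≤ s := hs
    have ht : 0 ≤ t := ht
    have hb : 0 < σ ^ 2 := by positivity
    have hM0 : (0 : ℝ) ≤ M := Nat.cast_nonneg M
    simp only
    rw [trace_aux S hS _ _ (mul_nonneg hs hM0) hb, trace_aux S hS _ _ (mul_nonneg ht hM0) hb,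
      Finset.mul_sum, Finset.mul_sum]
    refine Finset.sum_le_sum fun i _ => ?_
    have hd := hS.eigenvalues_nonneg i
    generalize hS.1.eigenvalues i = d at *
    have h1 : 0 < s * M * d + σ ^ 2 := by positivity
    have h2 : 0 < t * M * d + σ ^ 2 := by positivity
    rw [← mul_div_assoc, ← mul_div_assoc, div_le_div_iff₀ h1 h2]
    have h3 : 0 ≤ (t - s) * ((M : ℝ) ^ 2 * d ^ 2 * σ ^ 2) :=
      mul_nonneg (sub_nonneg.2 hst) (by positivity)
    nlinarith [h3]
  refine ⟨hmono, fun c h1 P h0 hle => ?_⟩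
  have := hmono (Set.mem_Ici.2 h0) (Set.mem_Ici.2 (h0.trans hle)) hle
  simp only at this
  linarith
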